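/- arXiv:2507.04653 — 2 statements merged into one kernel-verified Lean document; each statement's English description precedes it below -/
import Mathlib

section
/- For every positive integer n, w_n(x) equals the little Schröder polynomial s_n(x) = ∑_{k=1}^{n} (1/n)·C(n,k)·C(n,k-1)·x^{k-1}·(x+1)^{n-k} as polynomials. -/
/-!
Both polynomials have coefficient `C(n-1,d)·C(n+d+1,d)/(d+1)` at `x^d`. For `w_n` this follows from
the absorption identity. For `s_n`, absorption rewrites the sum as
`∑ i, C(n-1,i)·a_i·x^i·(x+1)^(n-1-i)` with `a_i = C(n,i)/(i+1)`; expanding the powers of `x+1`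
replaces `a` by its binomial transform `d ↦ ∑ i, C(d,i)·a_i`, which Vandermonde's identity
evaluates to `C(n+d+1,d)/(d+1)`.
-/

open Polynomial

/-- `w(n,k) = C(n-1,k-1)·C(n+k,k) − C(n,k)·C(n+k,k-1)`. -/
def w (n k : ℕ) : ℤ :=
  ((n - 1).choose (k - 1) * (n + k).choose k : ℤ) - (n.choose k * (n + k).choose (k - 1) : ℤ)

/-- `w_n(x) = ∑_{k=1}^{n} w(n,k) x^{k-1}`. -/
noncomputable def wPoly (n : ℕ) : Polynomial ℚ :=
  ∑ k ∈ Finset.Icc 1 n, Polynomial.C ((w n k : ℚ)) * X ^ (k - 1)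

/-- The little Schröder polynomial
`s_n(x) = ∑_{k=1}^{n} (1/n)·C(n,k)·C(n,k-1)·x^{k-1}·(x+1)^{n-k}`. -/
noncomputable def schroederPoly (n : ℕ) : Polynomial ℚ :=
  ∑ k ∈ Finset.Icc 1 n,
    Polynomial.C ((n.choose k * n.choose (k - 1) : ℚ) / n) * X ^ (k - 1) * (X + 1) ^ (n - k)

section

open Finset

theorem sum_choose_mul_pow_mul_add_pow {R : Type*} [CommSemiring R] (a : ℕ → R) (x y : R) (m : ℕ) :
    ∑ i ∈ range (m + 1), m.choose i * a i * x ^ i * (x + y) ^ (m - i) =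
      ∑ d ∈ range (m + 1),
        m.choose d * (∑ i ∈ range (d + 1), d.choose i * a i) * x ^ d * y ^ (m - d) := by
  have expand (i : ℕ) (hi : i ≤ m) : (x + y) ^ (m - i) =
      ∑ d ∈ Ico i (m + 1), x ^ (d - i) * y ^ (m - d) * (m - i).choose (d - i) := by
    rw [add_pow, sum_Ico_eq_sum_range, Nat.sub_add_comm hi]
    simp only [Nat.add_sub_cancel_left, Nat.sub_add_eq]
  have term (i d : ℕ) (hid : i ≤ d) :
      m.choose i * a i * x ^ i * (x ^ (d - i) * y ^ (m - d) * (m - i).choose (d - i)) =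
        m.choose d * (d.choose i * a i) * x ^ d * y ^ (m - d) := by
    have hchoose : (m.choose d * d.choose i : R) = m.choose i * (m - i).choose (d - i) := by
      rw [← Nat.cast_mul, Nat.choose_mul hid, Nat.cast_mul]
    calc
      _ = (m.choose i * (m - i).choose (d - i)) * a i * (x ^ i * x ^ (d - i)) * y ^ (m - d) := by
        ring
      _ = _ := by rw [← hchoose, pow_mul_pow_sub x hid, mul_assoc (m.choose d : R)]
  calc
    _ = ∑ i ∈ Ico 0 (m + 1), ∑ d ∈ Ico i (m + 1),
          m.choose d * (d.choose i * a i) * x ^ d * y ^ (m - d) := by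
      rw [range_eq_Ico]
      refine sum_congr rfl fun i hi => ?_
      rw [expand i (Nat.lt_succ_iff.mp (mem_Ico.mp hi).2), mul_sum]
      exact sum_congr rfl fun d hd => term i d (mem_Ico.mp hd).1
    _ = _ := by
      rw [sum_Ico_Ico_comm]
      simp only [← range_eq_Ico, mul_sum, sum_mul]

theorem sum_choose_add_mul_choose (n d r : ℕ) :
    ∑ i ∈ range (d + 1), (d + r).choose (i + r) * n.choose i = (n + d + r).choose d := by
  rw [add_assoc n, Nat.add_choose_eq, Nat.sum_antidiagonal_eq_sum_range_succ_mk]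
  refine sum_congr rfl fun i hi => ?_
  have hid : i ≤ d := Nat.lt_succ_iff.mp (mem_range.mp hi)
  rw [Nat.choose_symm_of_eq_add (show d + r = (i + r) + (d - i) by omega), mul_comm]

section Field

variable {K : Type*} [Field K] [CharZero K]

theorem cast_choose_div_add_one (n k : ℕ) :
    (n.choose k : K) / (k + 1) = (n + 1).choose (k + 1) / (n + 1) := by
  rw [div_eq_div_iff (Nat.cast_add_one_ne_zero k) (Nat.cast_add_one_ne_zero n), mul_comm]
  exact_mod_cast Nat.add_one_mul_choose_eq n k

theorem sum_choose_mul_choose_div_add_one (n d : ℕ) :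
    ∑ i ∈ range (d + 1), (d.choose i : K) * (n.choose i / (i + 1)) =
      (n + d + 1).choose d / (d + 1) := by
  calc
    _ = ∑ i ∈ range (d + 1), ((d + 1).choose (i + 1) * n.choose i : K) / (d + 1) := by
      refine sum_congr rfl fun i _ => ?_
      rw [mul_div_left_comm, cast_choose_div_add_one, mul_div_assoc', mul_comm]
    _ = _ := by
      rw [← sum_div, ← sum_choose_add_mul_choose n d 1]
      push_cast
      rfl

end Field

theorem add_one_mul_w_succ_succ (m j : ℕ) :
    (j + 1) * w (m + 1) (j + 1) = m.choose j * (m + 1 + j + 1).choose j := by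
  have absorb : ((m + 1) * m.choose j : ℤ) = (m + 1).choose (j + 1) * (j + 1) := by
    exact_mod_cast Nat.add_one_mul_choose_eq m j
  have ratio : ((m + 1 + j + 1).choose (j + 1) * (j + 1) : ℤ) =
      (m + 1 + j + 1).choose j * (m + 2) := by
    have h := Nat.choose_succ_right_eq (m + 1 + j + 1) j
    rw [show m + 1 + j + 1 - j = m + 2 by omega] at h
    exact_mod_cast h
  rw [w, Nat.add_sub_cancel, Nat.add_sub_cancel, ← add_assoc (m + 1) j 1]
  linear_combination (m.choose j : ℤ) * ratio + ((m + 1 + j + 1).choose j : ℤ) * absorb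

theorem wPoly_succ (m : ℕ) :
    wPoly (m + 1) = ∑ d ∈ range (m + 1),
      (m.choose d : ℚ[X]) * C ((m + 1 + d + 1).choose d / (d + 1) : ℚ) * X ^ d := by
  rw [wPoly, ← Ico_add_one_right_eq_Icc, sum_Ico_eq_sum_range, Nat.add_sub_cancel]
  refine sum_congr rfl fun d _ => ?_
  have hw : (w (m + 1) (d + 1) : ℚ) = m.choose d * ((m + 1 + d + 1).choose d / (d + 1)) := by
    rw [mul_div_assoc', eq_div_iff (Nat.cast_add_one_ne_zero d), mul_comm]
    exact_mod_cast add_one_mul_w_succ_succ m d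
  rw [add_comm 1 d, Nat.add_sub_cancel, hw, C_mul, map_natCast]

theorem schroederPoly_succ (m : ℕ) :
    schroederPoly (m + 1) = ∑ i ∈ range (m + 1),
      (m.choose i : ℚ[X]) * C ((m + 1).choose i / (i + 1) : ℚ) * X ^ i * (X + 1) ^ (m - i) := by
  rw [schroederPoly, ← Ico_add_one_right_eq_Icc, sum_Ico_eq_sum_range, Nat.add_sub_cancel]
  refine sum_congr rfl fun i _ => ?_
  have hcoeff : ((m + 1).choose (i + 1) * (m + 1).choose i : ℚ) / (m + 1 : ℕ) =
      m.choose i * ((m + 1).choose i / (i + 1)) := by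
    rw [mul_div_left_comm, cast_choose_div_add_one, Nat.cast_add_one, mul_div_assoc', mul_comm]
  rw [add_comm 1 i, Nat.add_sub_cancel, Nat.add_sub_add_right, hcoeff, C_mul, map_natCast]

end

/-- For every positive integer `n`, `w_n(x) = s_n(x)`. -/
theorem wPoly_eq_schroederPoly (n : ℕ) (hn : 1 ≤ n) : wPoly n = schroederPoly n := by
  obtain ⟨m, rfl⟩ := Nat.exists_eq_add_of_le' hn
  rw [wPoly_succ, schroederPoly_succ,
    sum_choose_mul_pow_mul_add_pow (fun i => C ((m + 1).choose i / (i + 1) : ℚ))]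
  refine Finset.sum_congr rfl fun d _ => ?_
  have htransform : C ((m + 1 + d + 1).choose d / (d + 1) : ℚ) = ∑ i ∈ Finset.range (d + 1),
      (d.choose i : ℚ[X]) * C ((m + 1).choose i / (i + 1) : ℚ) := by
    rw [← sum_choose_mul_choose_div_add_one, map_sum]
    simp only [C_mul, map_natCast]
  rw [htransform, one_pow, mul_one]
end

section
/- For all positive integers α, m, n, r, the q-polynomial congruence ∑_{k=0}^{n-1} [k(k+1)]^r · [2k+1] · q^{(n-1-k)(αm+1)} · w_k^{(α)}(x;q)^m ≡ 0 (mod [n]) holds, where the congruence is in ℤ[q][x] modulo the q-integer [n] = (1−q^n)/(1−q). -/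
open Polynomial LaurentPolynomial

/-- The Gaussian binomial coefficient as a polynomial in `q` over `ℤ`. -/
noncomputable def qbinom : ℕ → ℕ → Polynomial ℤ
  | _, 0 => 1
  | 0, _ + 1 => 0
  | n + 1, k + 1 => qbinom n k + Polynomial.X ^ (k + 1) * qbinom n (k + 1)

/-- The `q`-integer `[m] = 1 + q + ⋯ + q^{m-1}` in `ℤ[q]`. -/
noncomputable def qint (m : ℕ) : Polynomial ℤ := ∑ i ∈ Finset.range m, Polynomial.X ^ i

/-- The `q`-integer `[m]` as a Laurent polynomial in `q`. -/
noncomputable def qintL (m : ℕ) : LaurentPolynomial ℤ := (qint m).toLaurent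

/-- `qbinom(k-1,j-1)·qbinom(k+j,j) − qbinom(k,j)·qbinom(k+j,j-1)`. -/
noncomputable def qwCoeff (k j : ℕ) : Polynomial ℤ :=
  qbinom (k - 1) (j - 1) * qbinom (k + j) j - qbinom k j * qbinom (k + j) (j - 1)

/-- `w_k^{(α)}(x;q) = ∑_{j=1}^{k} q^{α(C(j+1,2)−(k+1)(j−1))} ·
(qbinom(k-1,j-1)·qbinom(k+j,j) − qbinom(k,j)·qbinom(k+j,j-1))^α · x^{j-1}`,
a polynomial in `x` with coefficients in `ℤ[q,q⁻¹]` (the exponent of `q` may be negative). -/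
noncomputable def qw (α k : ℕ) : Polynomial (LaurentPolynomial ℤ) :=
  ∑ j ∈ Finset.Icc 1 k,
    Polynomial.C (LaurentPolynomial.T ((α : ℤ) * (((j + 1).choose 2 : ℤ) - ((k : ℤ) + 1) * ((j : ℤ) - 1))) *
        ((qwCoeff k j).toLaurent) ^ α) *
      Polynomial.X ^ (j - 1)

/-!
The `q`-integer `[n]` is the product of the cyclotomic polynomials `Φ_d` with `d ∣ n`, `d ≠ 1`, so
it suffices that the sum vanishes when `q` is an `n`-th root of unity `u ≠ 1`, of order `d` say.
There the summands cancel in pairs `k, k'`, where `k'` is the mirror image of `k` in its block of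
`d` consecutive integers, so that `k + k' + 1 ≡ 0 (mod d)`.

Indeed `[k(k+1)]` takes the same value at `k` and `k'`, while `[2k+1] = -u^{2k+1} [2k'+1]`. If
`u^{k(k+1)} = 1`, both summands are zero because of the factor `[k(k+1)]^r`. Otherwise
`(1 - q^k) (1 - q^{k+1})` can be cancelled from the identity expressing the coefficients of `w_k`
through the products `qbinom(k,j) · qbinom(k+j,j)`, whose behaviour under `k ↦ k'` follows from
the `q`-Lucas theorem and the recursion in `j`. This gives `w_k = u^{(2k+1)α} w_{k'}`, and the
powers of `u` match.
-/

section GaussianBinomial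

theorem qbinom_zero_right (n : ℕ) : qbinom n 0 = 1 := by
  cases n <;> rfl

theorem qbinom_succ_succ (n k : ℕ) :
    qbinom (n + 1) (k + 1) = qbinom n k + X ^ (k + 1) * qbinom n (k + 1) := rfl

theorem qbinom_eq_zero_of_lt {n k : ℕ} (h : n < k) : qbinom n k = 0 := by
  induction n generalizing k with
  | zero =>
    obtain ⟨k, rfl⟩ := Nat.exists_eq_add_one_of_ne_zero h.ne'
    rfl
  | succ n ih =>
    obtain ⟨k, rfl⟩ := Nat.exists_eq_add_one_of_ne_zero (Nat.ne_zero_of_lt h)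
    rw [qbinom_succ_succ, ih (by omega), ih (by omega), mul_zero, add_zero]

theorem qbinom_self (n : ℕ) : qbinom n n = 1 := by
  induction n with
  | zero => rfl
  | succ n ih => rw [qbinom_succ_succ, ih, qbinom_eq_zero_of_lt n.lt_succ_self, mul_zero, add_zero]

theorem one_sub_X_pow_mul_qbinom_succ_succ (n k : ℕ) :
    (1 - X ^ (k + 1)) * qbinom (n + 1) (k + 1) = (1 - X ^ (n + 1)) * qbinom n k := by
  induction n generalizing k with
  | zero =>
    cases k with
    | zero => rw [qbinom_self, qbinom_self]
    | succ k => rw [qbinom_eq_zero_of_lt (by omega), qbinom_eq_zero_of_lt (by omega)]; ring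
  | succ n ih =>
    rw [qbinom_succ_succ]
    cases k with
    | zero =>
      have h := ih 0
      rw [qbinom_zero_right] at h ⊢
      linear_combination X * h
    | succ k =>
      linear_combination X ^ (k + 2) * ih (k + 1) + X * ih k -
        X * (1 - X ^ (n + 1)) * qbinom_succ_succ n k

theorem one_sub_X_pow_mul_qbinom_succ_right (n k : ℕ) :
    X ^ (k + 1) * (1 - X ^ (k + 1)) * qbinom n (k + 1) =
      (X ^ (k + 1) - X ^ (n + 1)) * qbinom n k := by
  linear_combination one_sub_X_pow_mul_qbinom_succ_succ n k -
    (1 - X ^ (k + 1)) * qbinom_succ_succ n k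

theorem one_sub_X_pow_mul_qbinom_add_succ (k j : ℕ) :
    (1 - X ^ (j + 1)) * qbinom (k + (j + 1)) (j + 1) =
      (1 - X ^ (k + 1)) * qbinom (k + (j + 1)) j := by
  refine mul_left_cancel₀ (pow_ne_zero (j + 1) X_ne_zero) ?_
  linear_combination one_sub_X_pow_mul_qbinom_succ_right (k + (j + 1)) j

/-- Up to a power of `q`, the coefficient of `x ^ j` in the `q`-Legendre polynomial of degree `k`.
Unlike `qwCoeff k j`, which is a multiple of it over `ℚ(q)`, it factors under the `q`-Lucas
theorem. -/
noncomputable def qLegendreCoeff (k j : ℕ) : ℤ[X] :=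
  qbinom k j * qbinom (k + j) j

theorem one_sub_X_pow_mul_qLegendreCoeff_succ (k j : ℕ) :
    X ^ (j + 1) * (1 - X ^ (j + 1)) ^ 2 * qLegendreCoeff k (j + 1) =
      (X ^ (j + 1) - X ^ (k + 1)) * (1 - X ^ (k + j + 1)) * qLegendreCoeff k j := by
  simp only [qLegendreCoeff, ← add_assoc]
  linear_combination
    (1 - X ^ (j + 1)) * qbinom (k + j + 1) (j + 1) * one_sub_X_pow_mul_qbinom_succ_right k j +
      (X ^ (j + 1) - X ^ (k + 1)) * qbinom k j * one_sub_X_pow_mul_qbinom_succ_succ (k + j) j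

theorem one_sub_X_pow_mul_qwCoeff_succ (k j : ℕ) :
    (1 - X ^ k) * (1 - X ^ (k + 1)) * qwCoeff k (j + 1) =
      X ^ k * (1 - X) * (1 - X ^ (j + 1)) * qLegendreCoeff k (j + 1) := by
  simp only [qwCoeff, qLegendreCoeff, Nat.add_sub_cancel]
  cases k with
  | zero => rw [qbinom_eq_zero_of_lt j.succ_pos]; ring
  | succ k =>
    rw [Nat.add_sub_cancel]
    linear_combination
      (1 - X ^ (k + 1)) * qbinom (k + 1) (j + 1) * one_sub_X_pow_mul_qbinom_add_succ (k + 1) j -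
        (1 - X ^ (k + 2)) * qbinom (k + 1 + (j + 1)) (j + 1) *
          one_sub_X_pow_mul_qbinom_succ_succ k j

theorem qwCoeff_eq_zero_of_lt {k j : ℕ} (hk : k ≠ 0) (h : k < j) : qwCoeff k j = 0 := by
  rw [qwCoeff, qbinom_eq_zero_of_lt (by omega), qbinom_eq_zero_of_lt h, zero_mul, zero_mul,
    sub_zero]

theorem coeff_qw {α k : ℕ} (hα : α ≠ 0) (hk : k ≠ 0) (i : ℕ) :
    (qw α k).coeff i =
      (T (((i + 2).choose 2 : ℤ) - (k + 1) * i) * toLaurent (qwCoeff k (i + 1))) ^ α := by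
  simp only [qw, finsetSum_coeff, coeff_C_mul_X_pow]
  rw [Finset.sum_eq_single (i + 1)]
  · simp [mul_pow, T_pow]
  · intro j hj hji
    have hj₁ := (Finset.mem_Icc.mp hj).1
    rw [if_neg (by omega)]
  · intro hi
    rw [qwCoeff_eq_zero_of_lt hk (by simpa using hi), map_zero, zero_pow hα, mul_zero, ite_self]

end GaussianBinomial

section BlockReflection

/-- The reflection of the block `{a * d, …, a * d + d - 1}` containing `k`: it keeps the quotient
of `k` by `d` and replaces the remainder `b` by `d - 1 - b`. -/
def blockReflect (d k : ℕ) : ℕ := d * (k / d) + (d - 1 - k % d)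

variable {d : ℕ}

theorem blockReflect_div (hd : 0 < d) (k : ℕ) : blockReflect d k / d = k / d := by
  rw [blockReflect, Nat.mul_add_div hd, Nat.div_eq_of_lt (show d - 1 - k % d < d by omega),
    add_zero]

theorem blockReflect_mod (hd : 0 < d) (k : ℕ) : blockReflect d k % d = d - 1 - k % d := by
  rw [blockReflect, Nat.mul_add_mod, Nat.mod_eq_of_lt (by omega)]

theorem blockReflect_blockReflect (hd : 0 < d) (k : ℕ) :
    blockReflect d (blockReflect d k) = k := by
  have hmod := Nat.mod_lt k hd
  rw [blockReflect, blockReflect_div hd, blockReflect_mod hd, Nat.sub_sub_self (by omega),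
    Nat.div_add_mod]

theorem blockReflect_lt {n k : ℕ} (hdn : d ∣ n) (hk : k < n) : blockReflect d k < n := by
  have hd : 0 < d := Nat.pos_of_dvd_of_pos hdn (by omega)
  refine Nat.lt_of_div_lt_div (c := d) ?_
  rw [blockReflect_div hd]
  exact Nat.div_lt_div_of_lt_of_dvd hdn hk

theorem add_blockReflect_add_one (hd : 0 < d) (k : ℕ) :
    k + blockReflect d k + 1 = d * (2 * (k / d) + 1) := by
  have hmod := Nat.mod_lt k hd
  have hk := Nat.div_add_mod k d
  rw [blockReflect, mul_add, mul_left_comm, mul_one]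
  omega

theorem pow_add_blockReflect_add_one_eq_one {M : Type*} [Monoid M] {g : M} (hg : g ^ d = 1)
    (hd : 0 < d) (k : ℕ) : g ^ (k + blockReflect d k + 1) = 1 := by
  rw [add_blockReflect_add_one hd, pow_mul, hg, one_pow]

theorem zpow_sub_mul_mul_pow_reflect {G : Type*} [Group G] {g : G} {k k' : ℕ}
    (h : g ^ (k + k' + 1) = 1) (e : ℤ) (i : ℕ) :
    g ^ (e - (k + 1) * i) * g ^ ((2 * k + 1) * (i + 1)) =
      g ^ (2 * k + 1) * g ^ (e - (k' + 1) * i) := by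
  have hpow : g ^ (((k + k' + 1) * i : ℕ) : ℤ) = 1 := by rw [zpow_natCast, pow_mul, h, one_pow]
  rw [← mul_one (g ^ (e - (k' + 1) * i)), ← hpow, ← zpow_natCast, ← zpow_natCast, ← zpow_add,
    ← zpow_add, ← zpow_add]
  congr 1
  push_cast
  ring

theorem sum_range_eq_zero_of_add_blockReflect_eq_zero {M : Type*} [AddCommMonoid M]
    [IsAddTorsionFree M] {f : ℕ → M} {n : ℕ} (hdn : d ∣ n)
    (h : ∀ k, f k + f (blockReflect d k) = 0) : ∑ k ∈ Finset.range n, f k = 0 := by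
  rcases n.eq_zero_or_pos with rfl | hn
  · rw [Finset.sum_range_zero]
  refine Finset.sum_involution (fun k _ => blockReflect d k) (fun k _ => h k) ?_ ?_ ?_
  · rintro k - hk hfix
    have hdouble := h k
    rw [hfix, ← two_nsmul] at hdouble
    exact hk ((nsmul_eq_zero_iff_right two_ne_zero).mp hdouble)
  · simpa only [Finset.mem_range] using fun k => blockReflect_lt hdn
  · exact fun k _ => blockReflect_blockReflect (Nat.pos_of_dvd_of_pos hdn hn) k

end BlockReflection

section Evaluation

variable {R : Type*} [CommRing R]

theorem one_sub_mul_aeval_qint (ζ : R) (m : ℕ) : (1 - ζ) * aeval ζ (qint m) = 1 - ζ ^ m := by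
  simp [qint, mul_neg_geom_sum]

theorem aeval_qbinom_succ_succ (ζ : R) (n k : ℕ) :
    aeval ζ (qbinom (n + 1) (k + 1)) =
      aeval ζ (qbinom n k) + ζ ^ (k + 1) * aeval ζ (qbinom n (k + 1)) := by
  simp [qbinom_succ_succ]

variable [IsDomain R] {ζ : R} {d : ℕ}

theorem aeval_qint_eq_zero_iff (hζ : ζ ≠ 1) (m : ℕ) : aeval ζ (qint m) = 0 ↔ ζ ^ m = 1 := by
  rw [← mul_eq_zero_iff_left (sub_ne_zero.mpr hζ.symm), one_sub_mul_aeval_qint, sub_eq_zero,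
    eq_comm]

theorem aeval_qint_mul_succ_eq {k k' : ℕ} (hζ : ζ ≠ 1) (h : ζ ^ (k + k' + 1) = 1) :
    aeval ζ (qint (k * (k + 1))) = aeval ζ (qint (k' * (k' + 1))) := by
  have hpow : ζ ^ (k * (k + 1)) = ζ ^ (k' * (k' + 1)) :=
    calc
      ζ ^ (k * (k + 1)) = ζ ^ (k * (k + 1)) * (ζ ^ (k + k' + 1)) ^ k' := by
        rw [h, one_pow, mul_one]
      _ = ζ ^ (k' * (k' + 1)) * (ζ ^ (k + k' + 1)) ^ k := by ring
      _ = ζ ^ (k' * (k' + 1)) := by rw [h, one_pow, mul_one]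
  refine mul_left_cancel₀ (sub_ne_zero.mpr hζ.symm) ?_
  rw [one_sub_mul_aeval_qint, one_sub_mul_aeval_qint, hpow]

theorem aeval_qint_two_mul_add_one_eq_neg {k k' : ℕ} (hζ : ζ ≠ 1) (h : ζ ^ (k + k' + 1) = 1) :
    aeval ζ (qint (2 * k + 1)) = -(ζ ^ (2 * k + 1) * aeval ζ (qint (2 * k' + 1))) := by
  have hpow : ζ ^ (2 * k + 1) * ζ ^ (2 * k' + 1) = 1 :=
    calc
      ζ ^ (2 * k + 1) * ζ ^ (2 * k' + 1) = (ζ ^ (k + k' + 1)) ^ 2 := by ring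
      _ = 1 := by rw [h, one_pow]
  refine mul_left_cancel₀ (sub_ne_zero.mpr hζ.symm) ?_
  linear_combination one_sub_mul_aeval_qint ζ (2 * k + 1) +
    ζ ^ (2 * k + 1) * one_sub_mul_aeval_qint ζ (2 * k' + 1) - hpow

theorem aeval_qbinom_eq_zero (hζ : IsPrimitiveRoot ζ d) {k : ℕ} (hk : k ≠ 0) (hkd : k < d) :
    aeval ζ (qbinom d k) = 0 := by
  obtain ⟨k, rfl⟩ := Nat.exists_eq_add_one_of_ne_zero hk
  obtain ⟨d, rfl⟩ := Nat.exists_eq_add_one_of_ne_zero (Nat.ne_zero_of_lt hkd)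
  have h := congrArg (aeval ζ) (one_sub_X_pow_mul_qbinom_succ_succ d k)
  simp only [map_mul, map_sub, map_one, map_pow, aeval_X, hζ.pow_eq_one, sub_self, zero_mul] at h
  exact (mul_eq_zero.mp h).resolve_left
    (sub_ne_zero.mpr (hζ.pow_ne_one_of_pos_of_lt hk hkd).symm)

theorem aeval_qbinom_add_order_of_lt (hζ : IsPrimitiveRoot ζ d) (n : ℕ) {k : ℕ} (hk : k < d) :
    aeval ζ (qbinom (n + d) k) = aeval ζ (qbinom n k) := by
  induction n generalizing k with
  | zero =>
    rcases k.eq_zero_or_pos with rfl | hk₀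
    · rw [qbinom_zero_right, qbinom_zero_right]
    · rw [zero_add, aeval_qbinom_eq_zero hζ hk₀.ne' hk, qbinom_eq_zero_of_lt hk₀, map_zero]
  | succ n ih =>
    cases k with
    | zero => rw [qbinom_zero_right, qbinom_zero_right]
    | succ k =>
      rw [Nat.add_right_comm, aeval_qbinom_succ_succ, aeval_qbinom_succ_succ, ih hk,
        ih (k.lt_succ_self.trans hk)]

theorem aeval_qbinom_add_order_add_order (hζ : IsPrimitiveRoot ζ d) (hd : 0 < d) (n k : ℕ) :
    aeval ζ (qbinom (n + d) (k + d)) = aeval ζ (qbinom n k) + aeval ζ (qbinom n (k + d)) := by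
  induction n generalizing k with
  | zero =>
    rw [zero_add, qbinom_eq_zero_of_lt (show 0 < k + d by omega), map_zero, add_zero]
    cases k with
    | zero => rw [zero_add, qbinom_self, qbinom_self]
    | succ k =>
      rw [qbinom_eq_zero_of_lt (show d < k + 1 + d by omega), qbinom_eq_zero_of_lt k.succ_pos]
  | succ n ih =>
    cases k with
    | zero =>
      obtain ⟨e, rfl⟩ := Nat.exists_eq_add_one_of_ne_zero hd.ne'
      have hself := ih 0
      have hlower := aeval_qbinom_add_order_of_lt hζ n e.lt_succ_self
      simp only [zero_add, ← add_assoc, qbinom_zero_right] at hself hlower ⊢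
      rw [aeval_qbinom_succ_succ, aeval_qbinom_succ_succ, Nat.add_right_comm n 1 e, hself, hlower,
        hζ.pow_eq_one]
      ring
    | succ k =>
      rw [Nat.add_right_comm n, Nat.add_right_comm k, aeval_qbinom_succ_succ,
        aeval_qbinom_succ_succ, aeval_qbinom_succ_succ, ih, Nat.add_right_comm k d, ih,
        Nat.add_right_comm k 1 d, pow_add, pow_add, pow_add, hζ.pow_eq_one]
      ring

theorem aeval_qbinom_lucas (hζ : IsPrimitiveRoot ζ d) (a c : ℕ) {b v : ℕ} (hb : b < v + d)
    (hv : v < d) :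
    aeval ζ (qbinom (d * a + b) (d * c + v)) = a.choose c * aeval ζ (qbinom b v) := by
  have hd : 0 < d := Nat.zero_lt_of_lt hv
  have hsucc (x y : ℕ) : d * (x + 1) + y = d * x + y + d := by ring
  induction a generalizing c with
  | zero =>
    cases c with
    | zero => simp
    | succ c =>
      rw [qbinom_eq_zero_of_lt (show d * 0 + b < d * (c + 1) + v by rw [hsucc]; omega)]
      simp
  | succ a ih =>
    rw [hsucc]
    cases c with
    | zero =>
      rw [mul_zero, zero_add, aeval_qbinom_add_order_of_lt hζ _ hv]
      simpa using ih 0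
    | succ c =>
      rw [hsucc, aeval_qbinom_add_order_add_order hζ hd, ← hsucc, ih, ih, Nat.choose_succ_succ]
      push_cast
      ring

theorem aeval_qLegendreCoeff_lucas (hζ : IsPrimitiveRoot ζ d) (hd : 0 < d) (k j : ℕ) :
    aeval ζ (qLegendreCoeff k j) = (k / d).choose (j / d) * (k / d + j / d).choose (j / d) *
      aeval ζ (qLegendreCoeff (k % d) (j % d)) := by
  have hk := Nat.mod_lt k hd
  have hj := Nat.mod_lt j hd
  have hkj : k + j = d * (k / d + j / d) + (k % d + j % d) := by
    linear_combination -Nat.div_add_mod k d - Nat.div_add_mod j d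
  have hleft := aeval_qbinom_lucas hζ (k / d) (j / d) (show k % d < j % d + d by omega) hj
  have hright := aeval_qbinom_lucas hζ (k / d + j / d) (j / d)
    (show k % d + j % d < j % d + d by omega) hj
  rw [Nat.div_add_mod, Nat.div_add_mod] at hleft
  rw [← hkj, Nat.div_add_mod] at hright
  rw [qLegendreCoeff, qLegendreCoeff, map_mul, map_mul, hleft, hright]
  ring

theorem aeval_qLegendreCoeff_reflect_of_lt (hζ : IsPrimitiveRoot ζ d) {k k' j : ℕ}
    (h : ζ ^ (k + k' + 1) = 1) (hj : j < d) :
    aeval ζ (qLegendreCoeff k j) =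
      ζ ^ ((2 * k + 1) * j) * aeval ζ (qLegendreCoeff k' j) := by
  induction j with
  | zero => simp [qLegendreCoeff, qbinom_zero_right]
  | succ j ih =>
    have hk := congrArg (aeval ζ) (one_sub_X_pow_mul_qLegendreCoeff_succ k j)
    have hk' := congrArg (aeval ζ) (one_sub_X_pow_mul_qLegendreCoeff_succ k' j)
    simp only [map_mul, map_sub, map_one, map_pow, aeval_X] at hk hk'
    rw [ih (j.lt_succ_self.trans hj)] at hk
    have hfactor : (ζ ^ (j + 1) - ζ ^ (k + 1)) * (1 - ζ ^ (k + j + 1)) =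
        ζ ^ (2 * k + 1) * ((ζ ^ (j + 1) - ζ ^ (k' + 1)) * (1 - ζ ^ (k' + j + 1))) := by
      linear_combination
        (ζ ^ (k + 1) - ζ ^ (j + 1) + ζ ^ (j + 1) * (ζ ^ (k + j + 1) - ζ ^ (k + k' + 1))) * h
    have hζ₀ : ζ ^ (j + 1) ≠ 0 := pow_ne_zero _ (hζ.ne_zero (Nat.ne_zero_of_lt hj))
    have hne : 1 - ζ ^ (j + 1) ≠ 0 :=
      sub_ne_zero.mpr (hζ.pow_ne_one_of_pos_of_lt j.succ_ne_zero hj).symm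
    refine mul_left_cancel₀ (mul_ne_zero hζ₀ (pow_ne_zero 2 hne)) ?_
    rw [hk, hfactor, mul_add (2 * k + 1), pow_add, mul_one]
    linear_combination -ζ ^ ((2 * k + 1) * j) * ζ ^ (2 * k + 1) * hk'

theorem aeval_qLegendreCoeff_blockReflect (hζ : IsPrimitiveRoot ζ d) (hd : 0 < d) (k j : ℕ) :
    aeval ζ (qLegendreCoeff k j) =
      ζ ^ ((2 * k + 1) * j) * aeval ζ (qLegendreCoeff (blockReflect d k) j) := by
  have hmod := Nat.mod_lt k hd
  have hsum : ζ ^ (k % d + (d - 1 - k % d) + 1) = 1 := by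
    rw [show k % d + (d - 1 - k % d) + 1 = d by omega, hζ.pow_eq_one]
  have hpow : ζ ^ ((2 * (k % d) + 1) * (j % d)) = ζ ^ ((2 * k + 1) * j) :=
    pow_eq_pow_of_modEq
      (((Nat.mod_modEq k d).mul_left 2 |>.add_right 1).mul (Nat.mod_modEq j d)) hζ.pow_eq_one
  rw [aeval_qLegendreCoeff_lucas hζ hd k, aeval_qLegendreCoeff_lucas hζ hd (blockReflect d k),
    blockReflect_div hd, blockReflect_mod hd,
    aeval_qLegendreCoeff_reflect_of_lt hζ hsum (Nat.mod_lt j hd), hpow]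
  ring

theorem aeval_qwCoeff_blockReflect (hζ : IsPrimitiveRoot ζ d) (hd : 0 < d) {k : ℕ} (j : ℕ)
    (hk : ζ ^ k ≠ 1) (hk_succ : ζ ^ (k + 1) ≠ 1) :
    aeval ζ (qwCoeff k (j + 1)) =
      ζ ^ ((2 * k + 1) * (j + 1)) * aeval ζ (qwCoeff (blockReflect d k) (j + 1)) := by
  have hsum : ζ ^ (k + blockReflect d k + 1) = 1 :=
    pow_add_blockReflect_add_one_eq_one hζ.pow_eq_one hd k
  have hcoeff := congrArg (aeval ζ) (one_sub_X_pow_mul_qwCoeff_succ k j)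
  have hcoeff' := congrArg (aeval ζ) (one_sub_X_pow_mul_qwCoeff_succ (blockReflect d k) j)
  simp only [map_mul, map_sub, map_one, map_pow, aeval_X] at hcoeff hcoeff'
  rw [aeval_qLegendreCoeff_blockReflect hζ hd] at hcoeff
  have hfactor : (1 - ζ ^ k) * (1 - ζ ^ (k + 1)) = ζ ^ (2 * k + 1) *
      ((1 - ζ ^ blockReflect d k) * (1 - ζ ^ (blockReflect d k + 1))) := by
    linear_combination
      (ζ ^ k + ζ ^ (k + 1) - 1 - ζ ^ (k + blockReflect d k + 1)) * hsum
  have hpow : ζ ^ (2 * k + 1) * ζ ^ blockReflect d k = ζ ^ k := by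
    linear_combination ζ ^ k * hsum
  refine mul_left_cancel₀ (mul_ne_zero (sub_ne_zero.mpr hk.symm) (sub_ne_zero.mpr hk_succ.symm)) ?_
  rw [hcoeff, hfactor, ← hpow]
  linear_combination -ζ ^ (2 * k + 1) * ζ ^ ((2 * k + 1) * (j + 1)) * hcoeff'

end Evaluation

section Specialization

variable {K : Type*} [CommRing K]

/-- The specialization `ℤ[q, q⁻¹] → K` sending `q` to the unit `u`. -/
noncomputable def qEval (u : Kˣ) : ℤ[T;T⁻¹] →+* K :=
  LaurentPolynomial.eval₂ (algebraMap ℤ K) u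

theorem qEval_T (u : Kˣ) (e : ℤ) : qEval u (T e) = ((u ^ e : Kˣ) : K) :=
  LaurentPolynomial.eval₂_T _ _ _

theorem qEval_toLaurent (u : Kˣ) (p : ℤ[X]) : qEval u (toLaurent p) = aeval (u : K) p :=
  LaurentPolynomial.eval₂_toLaurent _ _ _

/-- The weight `[k(k+1)]^r [2k+1] q^{(n-1-k)(s+1)}` multiplying `w_k^m` in the `k`-th summand, with
`s` standing for `α * m`. -/
noncomputable def qWeight (r s n k : ℕ) : ℤ[T;T⁻¹] :=
  qintL (k * (k + 1)) ^ r * qintL (2 * k + 1) * T (((n : ℤ) - 1 - k) * (s + 1))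

theorem qEval_qWeight (u : Kˣ) (r s n k : ℕ) :
    qEval u (qWeight r s n k) = aeval (u : K) (qint (k * (k + 1))) ^ r *
      aeval (u : K) (qint (2 * k + 1)) * ((u ^ ((n : ℤ) - 1 - k) : Kˣ) : K) ^ (s + 1) := by
  rw [qWeight, map_mul, map_mul, map_pow, qintL, qintL, qEval_toLaurent, qEval_toLaurent, qEval_T,
    zpow_mul, ← Units.val_pow_eq_pow_val]
  norm_cast

variable [IsDomain K] {u : Kˣ} {d : ℕ}

theorem qEval_qWeight_mul_pow_eq_neg {k k' : ℕ} (hu : (u : K) ≠ 1) (h : u ^ (k + k' + 1) = 1)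
    (r s n : ℕ) :
    qEval u (qWeight r s n k) * ((u : K) ^ (2 * k + 1)) ^ s = -qEval u (qWeight r s n k') := by
  have hK : (u : K) ^ (k + k' + 1) = 1 := by
    rw [← Units.val_pow_eq_pow_val, h, Units.val_one]
  have hpow : u ^ ((n : ℤ) - 1 - k') = u ^ ((n : ℤ) - 1 - k) * u ^ (2 * k + 1) := by
    rw [← mul_one (u ^ ((n : ℤ) - 1 - k')), ← h, ← zpow_natCast, ← zpow_natCast, ← zpow_add,
      ← zpow_add]
    congr 1
    push_cast
    ring
  rw [qEval_qWeight, qEval_qWeight, hpow, aeval_qint_mul_succ_eq hu hK,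
    aeval_qint_two_mul_add_one_eq_neg hu hK, Units.val_mul, Units.val_pow_eq_pow_val]
  ring

theorem map_qw_blockReflect (hu : IsPrimitiveRoot (u : K) d) (hd : 0 < d) {α k : ℕ} (hα : α ≠ 0)
    (hk : (u : K) ^ k ≠ 1) (hk_succ : (u : K) ^ (k + 1) ≠ 1) :
    (qw α k).map (qEval u) =
      Polynomial.C (((u : K) ^ (2 * k + 1)) ^ α) * (qw α (blockReflect d k)).map (qEval u) := by
  have hsum : u ^ (k + blockReflect d k + 1) = 1 :=
    pow_add_blockReflect_add_one_eq_one (IsPrimitiveRoot.coe_units_iff.mp hu).pow_eq_one hd k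
  have hk₀ : k ≠ 0 := fun h => hk (by rw [h, pow_zero])
  have hk₀' : blockReflect d k ≠ 0 := fun h => hk_succ (by
    rw [h, add_zero] at hsum
    rw [← Units.val_pow_eq_pow_val, hsum, Units.val_one])
  ext i
  rw [coeff_C_mul, coeff_map, coeff_map, coeff_qw hα hk₀, coeff_qw hα hk₀', map_pow, map_pow,
    ← mul_pow, map_mul, map_mul, qEval_T, qEval_T, qEval_toLaurent, qEval_toLaurent,
    aeval_qwCoeff_blockReflect hu hd i hk hk_succ]
  have hpow := congrArg Units.val (zpow_sub_mul_mul_pow_reflect hsum ((i + 2).choose 2) i)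
  push_cast at hpow
  congr 1
  linear_combination aeval (u : K) (qwCoeff (blockReflect d k) (i + 1)) * hpow

theorem map_summand_add_map_summand_blockReflect (hu : IsPrimitiveRoot (u : K) d) (hd : 1 < d)
    {α r : ℕ} (hα : α ≠ 0) (hr : r ≠ 0) (m n k : ℕ) :
    (Polynomial.C (qWeight r (α * m) n k) * qw α k ^ m).map (qEval u) +
      (Polynomial.C (qWeight r (α * m) n (blockReflect d k)) *
        qw α (blockReflect d k) ^ m).map (qEval u) = 0 := by
  have hd₀ : 0 < d := Nat.zero_lt_of_lt hd
  have hu₁ : (u : K) ≠ 1 := hu.ne_one hd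
  have hsum : u ^ (k + blockReflect d k + 1) = 1 :=
    pow_add_blockReflect_add_one_eq_one (IsPrimitiveRoot.coe_units_iff.mp hu).pow_eq_one hd₀ k
  have hweight := qEval_qWeight_mul_pow_eq_neg hu₁ hsum r (α * m) n
  simp only [Polynomial.map_mul, Polynomial.map_pow, Polynomial.map_C]
  by_cases hzero : (u : K) ^ (k * (k + 1)) = 1
  · have hleft : qEval u (qWeight r (α * m) n k) = 0 := by
      rw [qEval_qWeight, (aeval_qint_eq_zero_iff hu₁ _).mpr hzero, zero_pow hr, zero_mul, zero_mul]
    rw [hleft, zero_mul, zero_eq_neg] at hweight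
    rw [hleft, hweight, Polynomial.C_0, zero_mul, zero_mul, add_zero]
  · have hk : (u : K) ^ k ≠ 1 := fun h => hzero (by rw [pow_mul, h, one_pow])
    have hk_succ : (u : K) ^ (k + 1) ≠ 1 := fun h => hzero (by rw [pow_mul', h, one_pow])
    rw [map_qw_blockReflect hu hd₀ hα hk hk_succ, mul_pow, ← Polynomial.C_pow, ← pow_mul,
      ← mul_assoc, ← Polynomial.C_mul, hweight, Polynomial.C_neg, neg_mul, neg_add_cancel]

end Specialization

section Divisibility

variable {K : Type*} [Field K] [CharZero K] {μ : K} {n : ℕ}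

theorem qint_dvd_of_forall_aeval_eq_zero (hμ : IsPrimitiveRoot μ n) (hn : 0 < n) {p : ℤ[X]}
    (h : ∀ ζ : K, ζ ^ n = 1 → ζ ≠ 1 → aeval ζ p = 0) : qint n ∣ p := by
  rw [qint, ← prod_cyclotomic_eq_geom_sum hn]
  refine Finset.prod_dvd_of_isRelPrime (fun i hi j hj hij => ?_) fun i hi => ?_
  · have hi₀ : 0 < i := Nat.pos_of_mem_divisors (Finset.mem_of_mem_erase hi)
    have hj₀ : 0 < j := Nat.pos_of_mem_divisors (Finset.mem_of_mem_erase hj)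
    rw [Function.onFun, (cyclotomic.irreducible hi₀).isRelPrime_iff_not_dvd,
      (cyclotomic.irreducible hi₀).dvd_irreducible_iff_associated (cyclotomic.irreducible hj₀)]
    exact fun hassoc => hij (cyclotomic_injective
      (eq_of_monic_of_associated (cyclotomic.monic i ℤ) (cyclotomic.monic j ℤ) hassoc))
  · obtain ⟨hi₁, hin⟩ := Finset.mem_erase.mp hi
    obtain ⟨c, hc⟩ := Nat.dvd_of_mem_divisors hin
    have hi₀ : 0 < i := Nat.pos_of_mem_divisors hin
    have hroot : IsPrimitiveRoot (μ ^ c) i := hμ.pow hn (hc.trans (mul_comm i c))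
    rw [cyclotomic_eq_minpoly hroot hi₀]
    refine minpoly.isIntegrallyClosed_dvd (hroot.isIntegral hi₀) (h _ ?_ ?_)
    · rw [hc, pow_mul, hroot.pow_eq_one, one_pow]
    · exact hroot.ne_one (by omega)

theorem qintL_dvd_of_forall_qEval_eq_zero (hμ : IsPrimitiveRoot μ n) (hn : 0 < n) {f : ℤ[T;T⁻¹]}
    (h : ∀ u : Kˣ, u ^ n = 1 → u ≠ 1 → qEval u f = 0) : qintL n ∣ f := by
  obtain ⟨N, p, hp⟩ := f.exists_T_pow
  have hdvd : qint n ∣ p := by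
    refine qint_dvd_of_forall_aeval_eq_zero hμ hn fun ζ hζ hζ₁ => ?_
    obtain ⟨u, rfl⟩ := IsUnit.of_pow_eq_one hζ hn.ne'
    have hu := h u (Units.ext (by simpa using hζ)) fun hu₁ => hζ₁ (by simp [hu₁])
    rw [← qEval_toLaurent, hp, map_mul, hu, zero_mul]
  rw [← (isUnit_T (N : ℤ)).dvd_mul_right, ← hp]
  exact map_dvd toLaurent hdvd

theorem C_qintL_dvd_of_forall_map_qEval_eq_zero (hμ : IsPrimitiveRoot μ n) (hn : 0 < n)
    {F : ℤ[T;T⁻¹][X]} (h : ∀ u : Kˣ, u ^ n = 1 → u ≠ 1 → F.map (qEval u) = 0) :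
    Polynomial.C (qintL n) ∣ F := by
  rw [Polynomial.C_dvd_iff_dvd_coeff]
  refine fun i => qintL_dvd_of_forall_qEval_eq_zero hμ hn fun u hu hu₁ => ?_
  rw [← coeff_map, h u hu hu₁, coeff_zero]

end Divisibility

/-- For all positive integers `α, m, n, r`,
`∑_{k=0}^{n-1} [k(k+1)]^r [2k+1] q^{(n-1-k)(αm+1)} w_k^{(α)}(x;q)^m ≡ 0 (mod [n])`. -/
theorem qint_dvd_sum (α m n r : ℕ) (hα : 1 ≤ α) (hm : 1 ≤ m) (hn : 1 ≤ n) (hr : 1 ≤ r) :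
    (Polynomial.C (qintL n) : Polynomial (LaurentPolynomial ℤ)) ∣
      ∑ k ∈ Finset.range n,
        Polynomial.C ((qintL (k * (k + 1))) ^ r * qintL (2 * k + 1) *
            LaurentPolynomial.T (((n : ℤ) - 1 - k) * (α * m + 1))) *
          (qw α k) ^ m := by
  refine C_qintL_dvd_of_forall_map_qEval_eq_zero (Complex.isPrimitiveRoot_exp n (by omega)) hn
    fun u hu hu₁ => ?_
  have hroot : IsPrimitiveRoot (u : ℂ) (orderOf u) :=
    IsPrimitiveRoot.coe_units_iff.mpr (IsPrimitiveRoot.orderOf u)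
  have hdvd : orderOf u ∣ n := orderOf_dvd_of_pow_eq_one hu
  have horder : 1 < orderOf u :=
    lt_of_le_of_ne' (Nat.pos_of_dvd_of_pos hdvd hn) (orderOf_eq_one_iff.not.mpr hu₁)
  rw [Polynomial.map_sum]
  refine sum_range_eq_zero_of_add_blockReflect_eq_zero hdvd fun k => ?_
  simpa only [qWeight, Nat.cast_mul] using
    map_summand_add_map_summand_blockReflect hroot horder (by omega) (by omega) m n k
end
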